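/- The determinant of an alternating matrix of even size 2n over a commutative ring equals the square of its Pfaffian. -/

import Mathlib

open Finset in
/-- The set of permutations of `Fin (2*n)` giving normalized perfect matchings. -/
noncomputable def pfPerms (n : ℕ) : Finset (Equiv.Perm (Fin (2*n))) :=
  Finset.univ.filter (fun σ =>
    (∀ i : Fin n, σ ⟨2*i, by omega⟩ < σ ⟨2*i+1, by omega⟩) ∧
    (∀ i j : Fin n, i < j → σ ⟨2*(i:ℕ), by omega⟩ < σ ⟨2*(j:ℕ), by omega⟩))

/-- The Pfaffian of a `2n × 2n` matrix, as the signed sum over perfect matchings. -/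
noncomputable def pfaffian {R : Type*} [CommRing R] {n : ℕ}
    (A : Matrix (Fin (2*n)) (Fin (2*n)) R) : R :=
  ∑ σ ∈ pfPerms n, (Equiv.Perm.sign σ : ℤ) •
    ∏ i : Fin n, A (σ ⟨2*i, by omega⟩) (σ ⟨2*i+1, by omega⟩)

variable {R : Type*} [CommRing R]

section PfaffianTheory

open Equiv Equiv.Perm Matrix

/-- The bijection sending `(i, b)` to `2 * i + b`. -/
def pairEquiv (n : ℕ) : Fin n × Fin 2 ≃ Fin (2 * n) :=
  finProdFinEquiv.trans (finCongr (mul_comm n 2))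

lemma pairEquiv_zero {n : ℕ} (i : Fin n) :
    pairEquiv n (i, 0) = ⟨2 * i, by omega⟩ := by
  ext; simp [pairEquiv]

lemma pairEquiv_one {n : ℕ} (i : Fin n) :
    pairEquiv n (i, 1) = ⟨2 * i + 1, by omega⟩ := by
  ext; simp [pairEquiv]; omega

lemma mem_pfPerms {n : ℕ} {σ : Perm (Fin (2 * n))} :
    σ ∈ pfPerms n ↔ (∀ i, σ (pairEquiv n (i, 0)) < σ (pairEquiv n (i, 1))) ∧
      StrictMono fun i => σ (pairEquiv n (i, 0)) := by
  simp only [pfPerms, Finset.mem_filter_univ, pairEquiv_zero, pairEquiv_one]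
  rfl

/-- The term of the Pfaffian of `A` at a permutation, pairing the indices along `e`. -/
def pfaffianTerm {n : ℕ} {ι : Type*} [Fintype ι] [DecidableEq ι] (e : Fin n × Fin 2 ≃ ι)
    (A : Matrix ι ι R) (σ : Perm ι) : R :=
  (sign σ : ℤ) * ∏ i, A (σ (e (i, 0))) (σ (e (i, 1)))

lemma pfaffian_eq_sum_pfaffianTerm {n : ℕ} (A : Matrix (Fin (2 * n)) (Fin (2 * n)) R) :
    pfaffian A = ∑ σ ∈ pfPerms n, pfaffianTerm (pairEquiv n) A σ := by
  simp only [pfaffian, pfaffianTerm, zsmul_eq_mul, pairEquiv_zero, pairEquiv_one]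

section Congruence

lemma prod_pairs {n : ℕ} {ι : Type*} [Fintype ι] (e : Fin n × Fin 2 ≃ ι) (g : ι → R) :
    ∏ j, g j = ∏ i, g (e (i, 0)) * g (e (i, 1)) := by
  rw [← e.prod_comp, Fintype.prod_prod_type]
  simp

variable {ι : Type*} [Fintype ι] [DecidableEq ι]

lemma sum_mul_det_submatrix (B : Matrix ι ι R) (g : (ι → ι) → R) :
    ∑ f : ι → ι, g f * (B.submatrix id f).det =
      B.det * ∑ σ : Perm ι, (sign σ : ℤ) * g σ := by
  classical
  rw [← Finset.sum_subset (Finset.filter_subset Function.Bijective Finset.univ)]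
  · rw [Finset.mul_sum]
    symm
    refine Finset.sum_bij (fun σ _ => (σ : ι → ι)) (fun σ _ => by simp)
      (fun _ _ _ _ h => coe_fn_injective h)
      (fun f hf => ⟨Equiv.ofBijective f (Finset.mem_filter.1 hf).2, Finset.mem_univ _, rfl⟩)
      fun σ _ => ?_
    rw [det_permute']
    ring
  · intro f _ hf
    rw [Finset.mem_filter_univ, ← Finite.injective_iff_bijective, Function.Injective] at hf
    push Not at hf
    obtain ⟨i, j, hij, hne⟩ := hf
    rw [det_zero_of_column_eq hne fun k => by simp [hij], mul_zero]

lemma prod_mul_mul_transpose {n : ℕ} (e : Fin n × Fin 2 ≃ ι) (A B : Matrix ι ι R)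
    (σ : ι → ι) :
    ∏ i, (B * A * Bᵀ) (σ (e (i, 0))) (σ (e (i, 1))) =
      ∑ f : ι → ι, (∏ i, A (f (e (i, 0))) (f (e (i, 1)))) * ∏ j, B (σ j) (f j) := by
  have h (x y : ι) : (B * A * Bᵀ) x y =
      ∑ g : Fin 2 → ι, A (g 0) (g 1) * (B x (g 0) * B y (g 1)) := by
    rw [← (finTwoArrowEquiv ι).symm.sum_comp, Fintype.sum_prod_type_right]
    simp only [Matrix.mul_apply, transpose_apply, Finset.sum_mul]
    refine Finset.sum_congr rfl fun _ _ => Finset.sum_congr rfl fun _ _ => ?_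
    simp [finTwoArrowEquiv]
    ring
  simp only [h, Fintype.prod_sum, prod_pairs e, Finset.prod_mul_distrib]
  refine Fintype.sum_equiv ((Equiv.curry _ _ _).symm.trans (e.arrowCongr (Equiv.refl ι)))
    _ _ fun g => ?_
  simp [Equiv.arrowCongr]

lemma sum_pfaffianTerm_congr {n : ℕ} (e : Fin n × Fin 2 ≃ ι) (A B : Matrix ι ι R) :
    ∑ σ, pfaffianTerm e (B * A * Bᵀ) σ = B.det * ∑ σ, pfaffianTerm e A σ := by
  simp only [pfaffianTerm, prod_mul_mul_transpose]
  rw [← sum_mul_det_submatrix B fun f => ∏ i, A (f (e (i, 0))) (f (e (i, 1)))]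
  simp only [det_apply', Finset.mul_sum]
  rw [Finset.sum_comm]
  refine Finset.sum_congr rfl fun _ _ => Finset.sum_congr rfl fun _ _ => ?_
  simp only [submatrix_apply, id]
  ring

end Congruence

section PairPerm

variable {n : ℕ} {ι : Type*} (e : Fin n × Fin 2 ≃ ι)

/-- The permutation which applies `h.1 i` inside the `i`-th pair and then permutes the pairs
by `h.2`. -/
def pairPerm (h : (Fin n → Perm (Fin 2)) × Perm (Fin n)) : Perm ι :=
  e.permCongr (Equiv.prodCongrLeft (fun _ => h.2) * Equiv.prodCongrRight h.1)

@[simp]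
lemma pairPerm_apply (h : (Fin n → Perm (Fin 2)) × Perm (Fin n)) (i : Fin n) (b : Fin 2) :
    pairPerm e h (e (i, b)) = e (h.2 i, h.1 i b) := by
  simp [pairPerm, Equiv.permCongr_apply]

variable [Fintype ι] [DecidableEq ι]

lemma sign_pairPerm (h : (Fin n → Perm (Fin 2)) × Perm (Fin n)) :
    sign (pairPerm e h) = ∏ i, sign (h.1 i) := by
  rw [pairPerm, sign_permCongr, Perm.sign_mul, sign_prodCongrLeft, sign_prodCongrRight]
  simp

lemma perm_fin_two (p : Perm (Fin 2)) : p = 1 ∨ p = Equiv.swap 0 1 := by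
  revert p; decide

lemma pfaffianTerm_mul_pairPerm {A : Matrix ι ι R} (hA : Aᵀ = -A) (σ : Perm ι)
    (h : (Fin n → Perm (Fin 2)) × Perm (Fin n)) :
    pfaffianTerm e A (σ * pairPerm e h) = pfaffianTerm e A σ := by
  have hA' (x y : ι) : A y x = -A x y := congr_fun₂ hA x y
  have key (i : Fin n) : A (σ (e (h.2 i, h.1 i 0))) (σ (e (h.2 i, h.1 i 1))) =
      ((sign (h.1 i) : ℤ) : R) * A (σ (e (h.2 i, 0))) (σ (e (h.2 i, 1))) := by
    rcases perm_fin_two (h.1 i) with hi | hi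
    · simp [hi]
    · simp [hi, hA' (σ (e (h.2 i, 0)))]
  have hs : (((∏ i, sign (h.1 i) : ℤˣ) : ℤ) : R) * ∏ i, (((sign (h.1 i) : ℤˣ) : ℤ) : R) = 1 := by
    rw [← Int.cast_prod, ← Units.coe_prod, ← Int.cast_mul, ← Units.val_mul, Int.units_mul_self]
    simp
  simp only [pfaffianTerm, Perm.sign_mul, sign_pairPerm, Perm.mul_apply, pairPerm_apply, key,
    Finset.prod_mul_distrib, Units.val_mul, Int.cast_mul]
  rw [Equiv.prod_comp h.2 fun i => A (σ (e (i, 0))) (σ (e (i, 1)))]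
  linear_combination ((sign σ : ℤ) : R) * (∏ i, A (σ (e (i, 0))) (σ (e (i, 1)))) * hs

end PairPerm

section Normalization

variable {n : ℕ}

lemma eq_of_mul_pairPerm_mem_pfPerms {σ : Perm (Fin (2 * n))}
    {h h' : (Fin n → Perm (Fin 2)) × Perm (Fin n)}
    (hσ : σ * pairPerm (pairEquiv n) h ∈ pfPerms n)
    (hσ' : σ * pairPerm (pairEquiv n) h' ∈ pfPerms n) : h = h' := by
  simp only [mem_pfPerms, Perm.mul_apply, pairPerm_apply] at hσ hσ'
  have hε (i j : Fin n) (hij : h.2 i = h'.2 j) : h.1 i = h'.1 j := by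
    have h₁ := hσ.1 i
    have h₂ := hσ'.1 j
    rw [hij] at h₁
    rcases perm_fin_two (h.1 i) with hi | hi <;> rcases perm_fin_two (h'.1 j) with hj | hj <;>
      rw [hi, hj] <;> simp [hi, hj] at h₁ h₂ <;> exact absurd h₁ h₂.asymm
  have hmono : StrictMono fun i => h.2.symm (h'.2 i) := fun i j hij => by
    have := hσ'.2 hij
    rw [← hσ.2.lt_iff_lt]
    simpa [hε (h.2.symm (h'.2 i)) i (by simp), hε (h.2.symm (h'.2 j)) j (by simp)] using this
  have hπ : h'.2 = h.2 := by
    ext1 i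
    have := congr_fun hmono.eq_id i
    simpa [Equiv.symm_apply_eq] using this
  exact Prod.ext (funext fun i => hε i i (by rw [hπ])) hπ.symm

lemma exists_mul_pairPerm_mem_pfPerms (σ : Perm (Fin (2 * n))) :
    ∃ h, σ * pairPerm (pairEquiv n) h ∈ pfPerms n := by
  have hε (i : Fin n) : ∃ p : Perm (Fin 2),
      σ (pairEquiv n (i, p 0)) < σ (pairEquiv n (i, p 1)) := by
    rcases lt_or_gt_of_ne (a := σ (pairEquiv n (i, 0))) (b := σ (pairEquiv n (i, 1)))
      (by simp) with h | h
    · exact ⟨1, by simpa using h⟩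
    · exact ⟨Equiv.swap 0 1, by simpa using h⟩
  choose ε hε using hε
  let g : Fin n → Fin (2 * n) := fun i => σ (pairEquiv n (i, ε i 0))
  have hg : Function.Injective g := fun i j hij => by
    have := (pairEquiv n).injective (σ.injective hij)
    exact congr_arg Prod.fst this
  refine ⟨(fun i => ε (Tuple.sort g i), Tuple.sort g), ?_⟩
  simp only [mem_pfPerms, Perm.mul_apply, pairPerm_apply]
  exact ⟨fun i => hε _,
    (Tuple.monotone_sort g).strictMono_of_injective (hg.comp (Tuple.sort g).injective)⟩

lemma sum_pfaffianTerm {A : Matrix (Fin (2 * n)) (Fin (2 * n)) R} (hA : Aᵀ = -A) :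
    ∑ σ, pfaffianTerm (pairEquiv n) A σ =
      Fintype.card ((Fin n → Perm (Fin 2)) × Perm (Fin n)) * pfaffian A := by
  rw [pfaffian_eq_sum_pfaffianTerm, ← nsmul_eq_mul, ← Finset.card_univ, ← Finset.sum_const,
    ← Finset.sum_product']
  symm
  refine Finset.sum_bij (fun x _ => x.2 * (pairPerm (pairEquiv n) x.1)⁻¹) (by simp) ?_ ?_ ?_
  · rintro ⟨h, τ⟩ hx ⟨h', τ'⟩ hx' heq
    simp only [Finset.mem_product, Finset.mem_univ, true_and] at hx hx' heq
    have : h = h' := eq_of_mul_pairPerm_mem_pfPerms (σ := τ * (pairPerm (pairEquiv n) h)⁻¹)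
      (by simpa using hx) (by rw [heq]; simpa using hx')
    subst this
    simpa using heq
  · intro σ _
    obtain ⟨h, hh⟩ := exists_mul_pairPerm_mem_pfPerms σ
    exact ⟨(h, σ * pairPerm (pairEquiv n) h), by simpa using hh, by simp⟩
  · rintro ⟨h, τ⟩ _
    rw [← pfaffianTerm_mul_pairPerm _ hA (τ * _) h, inv_mul_cancel_right]

end Normalization

section Standard

/-- The block diagonal matrix with `n` blocks `!![0, 1; -1, 0]`. -/
def standardAlternating (R : Type*) [CommRing R] (n : ℕ) : Matrix (Fin (2 * n)) (Fin (2 * n)) R :=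
  Matrix.of fun x y =>
    if ((pairEquiv n).symm x).1 = ((pairEquiv n).symm y).1 then
      (!![0, 1; -1, 0] : Matrix (Fin 2) (Fin 2) R) ((pairEquiv n).symm x).2
        ((pairEquiv n).symm y).2
    else 0

lemma standardAlternating_apply {n : ℕ} (i j : Fin n) (b c : Fin 2) :
    standardAlternating R n (pairEquiv n (i, b)) (pairEquiv n (j, c)) =
      if i = j then (!![0, 1; -1, 0] : Matrix (Fin 2) (Fin 2) R) b c else 0 := by
  simp [standardAlternating]

lemma standardAlternating_transpose (n : ℕ) :
    (standardAlternating R n)ᵀ = -standardAlternating R n := by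
  ext x y
  obtain ⟨⟨i, b⟩, rfl⟩ := (pairEquiv n).surjective x
  obtain ⟨⟨j, c⟩, rfl⟩ := (pairEquiv n).surjective y
  simp only [transpose_apply, Matrix.neg_apply, standardAlternating_apply, eq_comm (a := j)]
  fin_cases b <;> fin_cases c <;> split_ifs <;> simp

lemma det_standardAlternating (n : ℕ) : (standardAlternating R n).det = 1 := by
  have : ((standardAlternating R n).submatrix
      ((Equiv.prodComm _ _).trans (pairEquiv n)) ((Equiv.prodComm _ _).trans (pairEquiv n))) =
      blockDiagonal fun _ => !![0, 1; -1, 0] := by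
    ext ⟨b, i⟩ ⟨c, j⟩
    simp [standardAlternating_apply, blockDiagonal_apply]
  rw [← det_submatrix_equiv_self ((Equiv.prodComm _ _).trans (pairEquiv n)), this]
  simp [det_fin_two_of]

lemma eq_one_of_mem_pfPerms {n : ℕ} {σ : Perm (Fin (2 * n))} (hσ : σ ∈ pfPerms n)
    (h : ∀ i, ((pairEquiv n).symm (σ (pairEquiv n (i, 0)))).1 =
      ((pairEquiv n).symm (σ (pairEquiv n (i, 1)))).1) : σ = 1 := by
  rw [mem_pfPerms] at hσ
  have key (i : Fin n) : ∃ j, σ (pairEquiv n (i, 0)) = pairEquiv n (j, 0) ∧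
      σ (pairEquiv n (i, 1)) = pairEquiv n (j, 1) := by
    have hlt := hσ.1 i
    have hi := h i
    obtain ⟨⟨j, b⟩, hb⟩ := (pairEquiv n).surjective (σ (pairEquiv n (i, 0)))
    obtain ⟨⟨k, c⟩, hc⟩ := (pairEquiv n).surjective (σ (pairEquiv n (i, 1)))
    rw [← hb, ← hc] at hlt hi ⊢
    simp only [Equiv.symm_apply_apply] at hi
    subst hi
    refine ⟨j, ?_⟩
    fin_cases b <;> fin_cases c <;>
      simp [pairEquiv_zero, pairEquiv_one] at hlt ⊢
  choose g hg₀ hg₁ using key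
  have hg : StrictMono g := fun i j hij => by
    have := hσ.2 hij
    simp only [hg₀] at this
    simp only [pairEquiv_zero, Fin.mk_lt_mk] at this
    rw [Fin.lt_def]
    omega
  obtain rfl := hg.eq_id
  ext1 x
  obtain ⟨⟨i, b⟩, rfl⟩ := (pairEquiv n).surjective x
  fin_cases b
  · exact hg₀ i
  · exact hg₁ i

lemma pfaffian_standardAlternating (n : ℕ) : pfaffian (standardAlternating R n) = 1 := by
  rw [pfaffian_eq_sum_pfaffianTerm, Finset.sum_eq_single 1]
  · simp [pfaffianTerm, standardAlternating_apply]
  · intro σ hσ hne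
    have : ∃ i, ((pairEquiv n).symm (σ (pairEquiv n (i, 0)))).1 ≠
        ((pairEquiv n).symm (σ (pairEquiv n (i, 1)))).1 := by
      by_contra! h
      exact hne (eq_one_of_mem_pfPerms hσ h)
    obtain ⟨i, hi⟩ := this
    rw [pfaffianTerm, Finset.prod_eq_zero (Finset.mem_univ i), mul_zero]
    simp [standardAlternating, hi]
  · intro h
    refine absurd (mem_pfPerms.2 ⟨fun i => ?_, fun i j hij => ?_⟩) h
    · simp [pairEquiv_zero, pairEquiv_one]
    · simpa [pairEquiv_zero] using hij

end Standard

section Field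

variable {K : Type*} [Field K]

/-- An alternating form supported on at most `2 * k` indices is a sum of `k` products of
linear forms in the exterior algebra. -/
lemma exists_eq_sum_wedge {ι : Type*} [DecidableEq ι] (k : ℕ) :
    ∀ (A : Matrix ι ι K) (s : Finset ι), (∀ x y, A y x = -A x y) → (∀ x, A x x = 0) →
      (∀ x y, x ∉ s → A x y = 0) → s.card ≤ 2 * k →
      ∃ u v : Fin k → ι → K, ∀ x y, A x y = ∑ i, (u i x * v i y - v i x * u i y) := by
  induction k with
  | zero =>
    intro A s _ _ hs hcard
    obtain rfl : s = ∅ := by simpa using hcard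
    exact ⟨0, 0, fun x y => by simp [hs]⟩
  | succ k ih =>
    intro A s hA hA₀ hs hcard
    by_cases h : ∀ a b, A a b = 0
    · exact ⟨0, 0, fun x y => by simp [h]⟩
    push Not at h
    obtain ⟨a, b, hab⟩ := h
    have ha : a ∈ s := by_contra fun ha => hab (hs _ _ ha)
    have hb : b ∈ s := by_contra fun hb => hab (by rw [hA b a, hs _ _ hb, neg_zero])
    have hne : a ≠ b := by rintro rfl; exact hab (hA₀ a)
    obtain ⟨u, v, huv⟩ := ih
      (Matrix.of fun x y => A x y - (A a x * (A b y / A a b) - A b x / A a b * A a y))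
      ((s.erase a).erase b)
      (fun x y => by simp only [of_apply]; rw [hA x y]; ring)
      (fun x => by simp only [of_apply, hA₀]; ring)
      (fun x y hx => by
        simp only [of_apply]
        by_cases hxb : x = b
        · subst hxb
          rw [hA₀]
          field_simp
          ring
        by_cases hxa : x = a
        · subst hxa
          rw [hA₀, hA x b]
          field_simp
          ring
        have hxs : x ∉ s := fun hxs => hx (by simp [hxa, hxb, hxs])
        rw [hs x y hxs, hA x a, hA x b, hs x a hxs, hs x b hxs]
        simp)
      (by
        rw [Finset.card_erase_of_mem (by simp [hne.symm, hb]), Finset.card_erase_of_mem ha]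
        omega)
    refine ⟨Fin.cons (A a) u, Fin.cons (fun x => A b x / A a b) v, fun x y => ?_⟩
    simp only [Fin.sum_univ_succ, Fin.cons_zero, Fin.cons_succ, ← huv, of_apply]
    ring

lemma exists_eq_mul_standardAlternating_mul_transpose {n : ℕ}
    (A : Matrix (Fin (2 * n)) (Fin (2 * n)) K) (hA : Aᵀ = -A) (hA₀ : ∀ i, A i i = 0) :
    ∃ B, A = B * standardAlternating K n * Bᵀ := by
  obtain ⟨u, v, huv⟩ := exists_eq_sum_wedge n A Finset.univ
    (fun x y => congr_fun₂ hA x y) hA₀ (by simp) (by simp)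
  refine ⟨Matrix.of fun x z => ![u ((pairEquiv n).symm z).1 x, v ((pairEquiv n).symm z).1 x]
    ((pairEquiv n).symm z).2, ?_⟩
  ext x y
  rw [huv]
  simp only [Matrix.mul_apply, transpose_apply, ← (pairEquiv n).sum_comp, Fintype.sum_prod_type,
    Fin.sum_univ_two, standardAlternating_apply, of_apply, Equiv.symm_apply_apply]
  refine Finset.sum_congr rfl fun i _ => ?_
  simp
  ring

lemma det_eq_pfaffian_sq_of_charZero [CharZero K] {n : ℕ}
    (A : Matrix (Fin (2 * n)) (Fin (2 * n)) K) (hA : Aᵀ = -A) (hA₀ : ∀ i, A i i = 0) :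
    A.det = pfaffian A ^ 2 := by
  obtain ⟨B, rfl⟩ := exists_eq_mul_standardAlternating_mul_transpose A hA hA₀
  have h := sum_pfaffianTerm_congr (pairEquiv n) (standardAlternating K n) B
  rw [sum_pfaffianTerm hA, sum_pfaffianTerm (standardAlternating_transpose n),
    pfaffian_standardAlternating, mul_one, mul_comm B.det] at h
  rw [mul_left_cancel₀ (Nat.cast_ne_zero.2 Fintype.card_ne_zero) h, det_mul, det_mul,
    det_transpose, det_standardAlternating]
  ring

end Field

section Generic

lemma pfaffian_map {S : Type*} [CommRing S] (f : R →+* S) {n : ℕ}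
    (A : Matrix (Fin (2 * n)) (Fin (2 * n)) R) : pfaffian (A.map f) = f (pfaffian A) := by
  simp [pfaffian]

/-- The alternating matrix whose entries above the diagonal are indeterminates. -/
noncomputable def genericAlternating (ι : Type*) [LinearOrder ι] :
    Matrix ι ι (MvPolynomial (ι × ι) ℤ) :=
  Matrix.of fun i j =>
    if i < j then MvPolynomial.X (i, j) else if j < i then -MvPolynomial.X (j, i) else 0

lemma genericAlternating_transpose (ι : Type*) [LinearOrder ι] :
    (genericAlternating ι)ᵀ = -genericAlternating ι := by
  ext1 i j
  rcases lt_trichotomy i j with h | rfl | h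
  · simp [genericAlternating, h, h.not_gt]
  · simp [genericAlternating]
  · simp [genericAlternating, h, h.not_gt]

lemma genericAlternating_diag {ι : Type*} [LinearOrder ι] (i : ι) :
    genericAlternating ι i i = 0 := by
  simp [genericAlternating]

lemma genericAlternating_map {ι : Type*} [LinearOrder ι] (A : Matrix ι ι R) (hA : Aᵀ = -A)
    (hA₀ : ∀ i, A i i = 0) :
    (genericAlternating ι).map (MvPolynomial.eval₂Hom (Int.castRingHom R) fun p => A p.1 p.2) =
      A := by
  have hA' (x y : ι) : A y x = -A x y := congr_fun₂ hA x y
  ext1 i j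
  rcases lt_trichotomy i j with h | rfl | h
  · simp [genericAlternating, h]
  · simp [genericAlternating, hA₀]
  · simp [genericAlternating, h, h.not_gt, hA' j i]

lemma det_genericAlternating (n : ℕ) :
    (genericAlternating (Fin (2 * n))).det = pfaffian (genericAlternating (Fin (2 * n))) ^ 2 := by
  let P := MvPolynomial (Fin (2 * n) × Fin (2 * n)) ℤ
  let f : P →+* FractionRing P := algebraMap P (FractionRing P)
  have hf : Function.Injective f := IsFractionRing.injective P (FractionRing P)
  have : CharZero (FractionRing P) := charZero_of_injective_algebraMap hf
  apply hf
  rw [map_pow, ← pfaffian_map, RingHom.map_det, RingHom.mapMatrix_apply]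
  refine det_eq_pfaffian_sq_of_charZero _ ?_ fun i => ?_
  · rw [← transpose_map, genericAlternating_transpose]
    ext
    simp
  · simp [genericAlternating_diag]

end Generic

end PfaffianTheory

/-- The determinant of an alternating matrix of even size `2n` equals the square of
its Pfaffian. -/
theorem det_alternating_eq_pfaffian_sq
    {R : Type*} [CommRing R] {n : ℕ} (φ : Matrix (Fin (2*n)) (Fin (2*n)) R)
    (halt : φ.transpose = -φ) (hdiag : ∀ i, φ i i = 0) :
    φ.det = pfaffian φ ^ 2 := by
  rw [← genericAlternating_map φ halt hdiag, ← RingHom.mapMatrix_apply, ← RingHom.map_det,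
    det_genericAlternating, RingHom.mapMatrix_apply, pfaffian_map, map_pow]
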